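/- Let F be an √−1ℝ-valued 2-form on ℝ⁸ with i(e₀)F = 0, i.e. F is the pullback of an √−1ℝ-valued 2-form on V ≅ ℝ⁷ (this is the pointwise model of a connection on a G₂-manifold Y pulled back to S¹ × Y). Then the following are equivalent: (1) *₇φ ∧ F + (1/6)F³ = 0 (the G₂ deformed Donaldson–Thomas equation); (2) π²₇( F + (1/6)·*₈F³ ) = 0; (3) π²₇( F + (1/6)·*₈F³ ) = 0 and π⁴₇( F² ) = 0. -/

import Mathlib

open scoped BigOperators

noncomputable section

namespace FMpaper

variable {K : Type*} [NormedField K] [NormedAlgebra ℝ K]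

/-- Coefficient model for the exterior algebra of `(ℝⁿ)*` with scalars in `K`:
a form is given by its coefficients on the basis `e^S`, `S ⊆ {0, …, n-1}` sorted. -/
abbrev Form (K : Type*) (n : ℕ) := Finset (Fin n) → K

variable {n : ℕ}

/-- Sign such that `e^s ∧ e^t = signMerge s t • e^(s ∪ t)` for disjoint sorted `s, t`. -/
def signMerge (s t : Finset (Fin n)) : K :=
  (-1 : K) ^ (((s ×ˢ t).filter (fun p => p.2 < p.1)).card)

/-- Wedge product. -/
def wedge (α β : Form K n) : Form K n :=
  fun u => ∑ s ∈ u.powerset, signMerge s (u \ s) * α s * β (u \ s)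

/-- Hodge star operator (for the standard inner product and orientation `e^{0⋯(n-1)}`). -/
def hstar (α : Form K n) : Form K n :=
  fun t => signMerge tᶜ t * α tᶜ

/-- Interior product with the basis vector `e_μ`. -/
def iprodB (μ : Fin n) (α : Form K n) : Form K n :=
  fun t => if μ ∈ t then 0
    else (-1 : K) ^ ((t.filter (fun j => j < μ)).card) * α (insert μ t)

/-- Interior product with the vector `v`. -/
def iprod (v : Fin n → K) (α : Form K n) : Form K n :=
  fun t => ∑ μ, v μ * iprodB μ α t

/-- The basis covector `e^i` as a 1-form. -/
def e1 (i : Fin n) : Form K n := fun s => if s = {i} then 1 else 0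

/-- The covector `v♭` dual to a vector `v`. -/
def flat (v : Fin n → K) : Form K n := ∑ i, v i • e1 i

/-- The vector `α♯` dual to a 1-form `α`. -/
def sharp1 (α : Form K n) : Fin n → K := fun i => α {i}

/-- The inner product of forms (extended `K`-bilinearly). -/
def inner' (α β : Form K n) : K := ∑ s, α s * β s

/-- The (Euclidean) norm of a form; for an `√-1 ℝ`-valued form `√-1 γ` this is `‖γ‖`. -/
def fnorm (α : Form K n) : ℝ := Real.sqrt (∑ s, ‖α s‖ ^ 2)

/-- `α` is homogeneous of degree `k`. -/
def isGrade (k : ℕ) (α : Form K n) : Prop := ∀ s, s.card ≠ k → α s = 0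

/-- Evaluation of a `k`-form on `k` vectors. -/
def evalForm {k : ℕ} (α : Form K n) (v : Fin k → (Fin n → K)) : K :=
  ∑ s : Finset (Fin n), α s *
    (if h : s.card = k then
      Matrix.det (Matrix.of fun i j => v i ((s.orderIsoOfFin h j : Fin n))) else 0)

/-- The matrix of the skew-symmetric endomorphism `γ♯` associated with a 2-form `γ`
via `⟨γ♯ u, v⟩ = γ(u, v)`. -/
def mat2 (γ : Form K n) : Matrix (Fin n) (Fin n) K :=
  Matrix.of fun i j => if i < j then γ {i, j} else if j < i then - γ {i, j} else 0

/-- The standard `G₂` 3-form `φ = e^{123}+e^{145}+e^{167}+e^{246}−e^{257}−e^{347}−e^{356}`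
on `ℝ⁷` (indices `1, …, 7` shifted to `0, …, 6`). -/
def phi7 : Form K 7 := fun s =>
  if s = ({0, 1, 2} : Finset (Fin 7)) then 1
  else if s = ({0, 3, 4} : Finset (Fin 7)) then 1
  else if s = ({0, 5, 6} : Finset (Fin 7)) then 1
  else if s = ({1, 3, 5} : Finset (Fin 7)) then 1
  else if s = ({1, 4, 6} : Finset (Fin 7)) then -1
  else if s = ({2, 3, 6} : Finset (Fin 7)) then -1
  else if s = ({2, 4, 5} : Finset (Fin 7)) then -1
  else 0

/-- `*₇φ = e^{4567}+e^{2367}+e^{2345}+e^{1357}−e^{1346}−e^{1256}−e^{1247}` on `ℝ⁷`. -/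
def psi7 : Form K 7 := fun s =>
  if s = ({3, 4, 5, 6} : Finset (Fin 7)) then 1
  else if s = ({1, 2, 5, 6} : Finset (Fin 7)) then 1
  else if s = ({1, 2, 3, 4} : Finset (Fin 7)) then 1
  else if s = ({0, 2, 4, 6} : Finset (Fin 7)) then 1
  else if s = ({0, 2, 3, 5} : Finset (Fin 7)) then -1
  else if s = ({0, 1, 4, 5} : Finset (Fin 7)) then -1
  else if s = ({0, 1, 3, 6} : Finset (Fin 7)) then -1
  else 0

/-- The `G₂` 3-form `φ` on `V = span{e₁, …, e₇} ⊂ ℝ⁸`, regarded as a form on `ℝ⁸`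
annihilated by `i(e₀)` (indices `1, …, 7` of `ℝ⁸`). -/
def phi8 : Form K 8 := fun s =>
  if s = ({1, 2, 3} : Finset (Fin 8)) then 1
  else if s = ({1, 4, 5} : Finset (Fin 8)) then 1
  else if s = ({1, 6, 7} : Finset (Fin 8)) then 1
  else if s = ({2, 4, 6} : Finset (Fin 8)) then 1
  else if s = ({2, 5, 7} : Finset (Fin 8)) then -1
  else if s = ({3, 4, 7} : Finset (Fin 8)) then -1
  else if s = ({3, 5, 6} : Finset (Fin 8)) then -1
  else 0

/-- `*₇φ` on `V ⊂ ℝ⁸`, regarded as a 4-form on `ℝ⁸` annihilated by `i(e₀)`. -/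
def psi8 : Form K 8 := fun s =>
  if s = ({4, 5, 6, 7} : Finset (Fin 8)) then 1
  else if s = ({2, 3, 6, 7} : Finset (Fin 8)) then 1
  else if s = ({2, 3, 4, 5} : Finset (Fin 8)) then 1
  else if s = ({1, 3, 5, 7} : Finset (Fin 8)) then 1
  else if s = ({1, 3, 4, 6} : Finset (Fin 8)) then -1
  else if s = ({1, 2, 5, 6} : Finset (Fin 8)) then -1
  else if s = ({1, 2, 4, 7} : Finset (Fin 8)) then -1
  else 0

/-- The standard Cayley 4-form `Φ = e⁰ ∧ φ + *₇φ` on `ℝ⁸`. -/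
def Phi8 : Form K 8 := wedge (e1 0) phi8 + psi8

/-- The index set of `V = span{e₁, …, e₇} ⊂ ℝ⁸`. -/
def Vset : Finset (Fin 8) := {1, 2, 3, 4, 5, 6, 7}

/-- The Hodge star `*₇` of `V ⊂ ℝ⁸` (volume form `e^{1⋯7}`), acting on forms on `ℝ⁸`
annihilated by `i(e₀)`. -/
def star7 (α : Form K 8) : Form K 8 :=
  fun t => if (0 : Fin 8) ∈ t then 0 else signMerge (Vset \ t) t * α (Vset \ t)

/-- `α` is (the pullback of) a form on `V`, i.e. `i(e₀) α = 0`. -/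
def onV (α : Form K 8) : Prop := ∀ s, (0 : Fin 8) ∈ s → α s = 0

/-- `λ²(α) = ½ (e⁰ ∧ α + i(α♯) φ)` for `α ∈ V*`. -/
def lambda2 (α : Form K 8) : Form K 8 :=
  (2 : K)⁻¹ • (wedge (e1 0) α + iprod (sharp1 α) phi8)

/-- `λ⁴(α) = (1/√8) (e⁰ ∧ i(α♯) *₇φ − α ∧ φ)` for `α ∈ V*`. -/
def lambda4 (α : Form K 8) : Form K 8 :=
  (algebraMap ℝ K (Real.sqrt 8))⁻¹ • (wedge (e1 0) (iprod (sharp1 α) psi8) - wedge α phi8)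

/-- `λ⁶(α) = *₈ λ²(α)` for `α ∈ V*`. -/
def lambda6 (α : Form K 8) : Form K 8 := hstar (lambda2 α)

/-- The projection `π²₇(α) = (α + *₈(Φ ∧ α))/4` onto `Λ²₇`. -/
def pi27 (α : Form K 8) : Form K 8 := (4 : K)⁻¹ • (α + hstar (wedge Phi8 α))

/-- The projection `π⁴₇(β) = Σ_{μ=1}^{7} ⟨β, λ⁴(e^μ)⟩ λ⁴(e^μ)` onto `Λ⁴₇`. -/
def pi47 (β : Form K 8) : Form K 8 :=
  ∑ μ : Fin 7, inner' β (lambda4 (e1 μ.succ)) • lambda4 (e1 μ.succ)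

/-- `τ(u₀,u₁,u₂,u₃) = Σ_{μ=1}^{7} λ⁴(e^μ)(u₀,u₁,u₂,u₃) ⬝ λ⁴(e^μ) = π⁴₇(u₀♭∧u₁♭∧u₂♭∧u₃♭)`. -/
def tau4 (u : Fin 4 → (Fin 8 → K)) : Form K 8 :=
  ∑ μ : Fin 7, evalForm (lambda4 (e1 μ.succ)) u • lambda4 (e1 μ.succ)

/-- Partial derivative `∂f^a/∂x^j` at `x`. -/
def pd {m p : ℕ} (f : (Fin m → ℝ) → (Fin p → ℝ)) (x : Fin m → ℝ) (j : Fin m) (a : Fin p) : ℝ :=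
  fderiv ℝ f x (Pi.single j 1) a


set_option linter.unusedSimpArgs false
set_option linter.unusedVariables false

/-- sign from a parity bit -/
def sgB (b : Bool) : ℂ := if b then -1 else 1

lemma signMerge_eq (s t : Finset (Fin 8)) (b : Bool)
    (h : decide ((((s ×ˢ t).filter (fun p => p.2 < p.1)).card) % 2 = 1) = b) :
    (signMerge s t : ℂ) = sgB b := by
  subst h
  unfold signMerge sgB
  rcases Nat.mod_two_eq_zero_or_one (((s ×ˢ t).filter (fun p => p.2 < p.1)).card) with h | h
  · rw [Even.neg_one_pow (Nat.even_iff.2 h)]; simp [h]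
  · rw [Odd.neg_one_pow (Nat.odd_iff.2 h)]; simp [h]

/-- contraction with the smallest index -/
def Cc (a : Fin 8) (α : Form ℂ 8) : Form ℂ 8 := fun s => if a ∈ s then 0 else α (insert a s)

lemma grade_Cc (k : ℕ) (a : Fin 8) (α : Form ℂ 8) (h : isGrade (k + 1) α) :
    isGrade k (Cc a α) := by
  intro s hs
  unfold Cc
  split_ifs with ha
  · rfl
  · apply h
    rw [Finset.card_insert_of_notMem ha]
    omega

lemma signMerge_insert_left (a : Fin 8) (s t : Finset (Fin 8)) (ht : ∀ x ∈ t, a < x) :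
    (signMerge (insert a s) t : ℂ) = signMerge s t := by
  unfold signMerge
  congr 2
  ext ⟨p, q⟩
  simp only [Finset.mem_filter, Finset.mem_product, Finset.mem_insert]
  constructor
  · rintro ⟨⟨rfl | h1, h2⟩, h3⟩
    · exact absurd h3 (not_lt.2 (ht q h2).le)
    · exact ⟨⟨h1, h2⟩, h3⟩
  · rintro ⟨⟨h1, h2⟩, h3⟩
    exact ⟨⟨Or.inr h1, h2⟩, h3⟩

lemma signMerge_insert_right (a : Fin 8) (s t : Finset (Fin 8)) (hs : ∀ x ∈ s, a < x)
    (ht : a ∉ t) :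
    (signMerge s (insert a t) : ℂ) = (-1) ^ s.card * signMerge s t := by
  unfold signMerge
  rw [← pow_add]
  congr 1
  have : (s ×ˢ insert a t).filter (fun p => p.2 < p.1) =
      (s ×ˢ {a}) ∪ (s ×ˢ t).filter (fun p => p.2 < p.1) := by
    ext ⟨p, q⟩
    simp only [Finset.mem_filter, Finset.mem_product, Finset.mem_insert, Finset.mem_union,
      Finset.mem_singleton]
    constructor
    · rintro ⟨⟨h1, rfl | h2⟩, h3⟩
      · exact Or.inl ⟨h1, rfl⟩
      · exact Or.inr ⟨⟨h1, h2⟩, h3⟩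
    · rintro (⟨h1, rfl⟩ | ⟨⟨h1, h2⟩, h3⟩)
      · exact ⟨⟨h1, Or.inl rfl⟩, hs p h1⟩
      · exact ⟨⟨h1, Or.inr h2⟩, h3⟩
  rw [this, Finset.card_union_of_disjoint, Finset.card_product]
  · simp
  · rw [Finset.disjoint_left]
    rintro ⟨p, q⟩ h1 h2
    simp only [Finset.mem_filter, Finset.mem_product, Finset.mem_singleton] at h1 h2
    exact ht (h1.2 ▸ h2.1.2)

lemma wedge_rec (k : ℕ) (α β : Form ℂ 8) (h : isGrade k α) (a : Fin 8) (u : Finset (Fin 8))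
    (hu : ∀ x ∈ u, a < x) :
    wedge α β (insert a u) = wedge (Cc a α) β u + (-1) ^ k * wedge α (Cc a β) u := by
  have hau : a ∉ u := fun h => lt_irrefl _ (hu a h)
  unfold wedge
  rw [Finset.sum_powerset_insert hau, add_comm, Finset.mul_sum]
  congr 1
  · apply Finset.sum_congr rfl
    intro s hs
    rw [Finset.mem_powerset] at hs
    have has : a ∉ s := fun h => hau (hs h)
    have e : insert a u \ insert a s = u \ s := by
      ext x
      simp only [Finset.mem_sdiff, Finset.mem_insert]
      constructor
      · rintro ⟨rfl | h1, h2⟩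
        · exact absurd (Or.inl rfl) h2
        · exact ⟨h1, fun h => h2 (Or.inr h)⟩
      · rintro ⟨h1, h2⟩
        refine ⟨Or.inr h1, ?_⟩
        rintro (rfl | h)
        · exact hau h1
        · exact h2 h
    rw [e, signMerge_insert_left _ _ _ (fun x hx => hu x (Finset.mem_sdiff.1 hx).1)]
    simp [Cc, has]
  · apply Finset.sum_congr rfl
    intro s hs
    rw [Finset.mem_powerset] at hs
    have has : a ∉ s := fun h => hau (hs h)
    have ha' : a ∉ u \ s := fun h => hau (Finset.mem_sdiff.1 h).1
    rw [Finset.insert_sdiff_of_notMem _ has,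
      signMerge_insert_right _ _ _ (fun x hx => hu x (hs hx)) ha']
    by_cases hk : s.card = k
    · simp only [Cc, ha', hk, if_false]
      ring
    · rw [h s hk]; simp

lemma wedge_zero (α β : Form ℂ 8) (h : isGrade 0 α) (u : Finset (Fin 8)) :
    wedge α β u = α ∅ * β u := by
  unfold wedge
  rw [Finset.sum_eq_single ∅]
  · simp [signMerge]
  · intro s _ hs
    rw [h s (by simpa using hs)]; simp
  · intro h; simp at h

lemma wedge_empty (k : ℕ) (hk : 0 < k) (α β : Form ℂ 8) (h : isGrade k α) :
    wedge α β ∅ = 0 := by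
  unfold wedge
  simp [h ∅ (by simpa using hk.ne)]

lemma wedge_single (k : ℕ) (hk : 0 < k) (α β : Form ℂ 8) (h : isGrade k α) (a : Fin 8) :
    wedge α β {a} = wedge (Cc a α) β ∅ := by
  have := wedge_rec k α β h a ∅ (by simp)
  rw [wedge_empty k hk α _ h] at this
  simpa using this

lemma wr1 (α β : Form ℂ 8) (h : isGrade 1 α) (a : Fin 8) (u : Finset (Fin 8))
    (hu : ∀ x ∈ u, a < x) :
    wedge α β (insert a u) = wedge (Cc a α) β u - wedge α (Cc a β) u := by
  rw [wedge_rec 1 α β h a u hu]; ring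

lemma wr2 (α β : Form ℂ 8) (h : isGrade 2 α) (a : Fin 8) (u : Finset (Fin 8))
    (hu : ∀ x ∈ u, a < x) :
    wedge α β (insert a u) = wedge (Cc a α) β u + wedge α (Cc a β) u := by
  rw [wedge_rec 2 α β h a u hu]; ring

lemma wr3 (α β : Form ℂ 8) (h : isGrade 3 α) (a : Fin 8) (u : Finset (Fin 8))
    (hu : ∀ x ∈ u, a < x) :
    wedge α β (insert a u) = wedge (Cc a α) β u - wedge α (Cc a β) u := by
  rw [wedge_rec 3 α β h a u hu]; ring

lemma wr4 (α β : Form ℂ 8) (h : isGrade 4 α) (a : Fin 8) (u : Finset (Fin 8))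
    (hu : ∀ x ∈ u, a < x) :
    wedge α β (insert a u) = wedge (Cc a α) β u + wedge α (Cc a β) u := by
  rw [wedge_rec 4 α β h a u hu]; ring

lemma gc0 (a : Fin 8) (α : Form ℂ 8) (h : isGrade 1 α) : isGrade 0 (Cc a α) := grade_Cc 0 a α h
lemma gc1 (a : Fin 8) (α : Form ℂ 8) (h : isGrade 2 α) : isGrade 1 (Cc a α) := grade_Cc 1 a α h
lemma gc2 (a : Fin 8) (α : Form ℂ 8) (h : isGrade 3 α) : isGrade 2 (Cc a α) := grade_Cc 2 a α h
lemma gc3 (a : Fin 8) (α : Form ℂ 8) (h : isGrade 4 α) : isGrade 3 (Cc a α) := grade_Cc 3 a α h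

lemma Cc_apply (a : Fin 8) (α : Form ℂ 8) (u : Finset (Fin 8)) (hu : ∀ x ∈ u, a < x) :
    Cc a α u = α (insert a u) := by
  have hau : a ∉ u := fun h => lt_irrefl _ (hu a h)
  simp [Cc, hau]

lemma W4 (F H : Form ℂ 8) (h2 : isGrade 2 F) (a b c d : Fin 8) (h : a < b ∧ b < c ∧ c < d) :
    wedge F H {a, b, c, d} = F {a, b} * H {c, d} - F {a, c} * H {b, d} + F {a, d} * H {b, c}
     + F {b, c} * H {a, d} - F {b, d} * H {a, c} + F {c, d} * H {a, b} := by
  obtain ⟨h1, h3, h4⟩ := h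
  have lab : a < b := by lia
  have lac : a < c := by lia
  have lad : a < d := by lia
  have lbc : b < c := by lia
  have lbd : b < d := by lia
  have lcd : c < d := by lia
  simp (maxDischargeDepth := 12) only [wr1, wr2, wr3, wr4, gc0, gc1, gc2, gc3, wedge_zero, wedge_single 1 (by decide), wedge_single 2 (by decide),
    wedge_single 3 (by decide), wedge_single 4 (by decide), wedge_empty 1 (by decide), wedge_empty 2 (by decide), wedge_empty 3 (by decide), wedge_empty 4 (by decide),
    Finset.mem_insert, Finset.mem_singleton, Finset.notMem_empty, forall_eq_or_imp, forall_eq,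
    false_imp_iff, implies_true, and_self, and_true, true_and, zero_add, insert_empty_eq,
    Cc_apply, h2, lab, lac, lad, lbc, lbd, lcd]
  ring

lemma W6 (F H : Form ℂ 8) (h2 : isGrade 2 F) (a b c d e f : Fin 8)
    (h : a < b ∧ b < c ∧ c < d ∧ d < e ∧ e < f) :
    wedge F H {a, b, c, d, e, f} =
      F {a, b} * H {c, d, e, f} - F {a, c} * H {b, d, e, f} + F {a, d} * H {b, c, e, f}
      - F {a, e} * H {b, c, d, f} + F {a, f} * H {b, c, d, e}
      + F {b, c} * H {a, d, e, f} - F {b, d} * H {a, c, e, f} + F {b, e} * H {a, c, d, f}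
      - F {b, f} * H {a, c, d, e}
      + F {c, d} * H {a, b, e, f} - F {c, e} * H {a, b, d, f} + F {c, f} * H {a, b, d, e}
      + F {d, e} * H {a, b, c, f} - F {d, f} * H {a, b, c, e} + F {e, f} * H {a, b, c, d} := by
  obtain ⟨h1, h3, h4, h5, h6⟩ := h
  have lab : a < b := by lia
  have lac : a < c := by lia
  have lad : a < d := by lia
  have lae : a < e := by lia
  have laf : a < f := by lia
  have lbc : b < c := by lia
  have lbd : b < d := by lia
  have lbe : b < e := by lia
  have lbf : b < f := by lia
  have lcd : c < d := by lia
  have lce : c < e := by lia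
  have lcf : c < f := by lia
  have lde : d < e := by lia
  have ldf : d < f := by lia
  have lef : e < f := by lia
  simp (maxDischargeDepth := 12) only [wr1, wr2, wr3, wr4, gc0, gc1, gc2, gc3, wedge_zero, wedge_single 1 (by decide), wedge_single 2 (by decide),
    wedge_single 3 (by decide), wedge_single 4 (by decide), wedge_empty 1 (by decide), wedge_empty 2 (by decide), wedge_empty 3 (by decide), wedge_empty 4 (by decide),
    Finset.mem_insert, Finset.mem_singleton, Finset.notMem_empty, forall_eq_or_imp, forall_eq,
    false_imp_iff, implies_true, and_self, and_true, true_and, zero_add, insert_empty_eq,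
    Cc_apply, h2, lab, lac, lad, lae, laf, lbc, lbd, lbe, lbf, lcd, lce, lcf, lde, ldf, lef]
  ring

lemma W6R (F H : Form ℂ 8) (h2 : isGrade 2 F) (hH : isGrade 4 H) (a b c d e f : Fin 8)
    (h : a < b ∧ b < c ∧ c < d ∧ d < e ∧ e < f) :
    wedge H F {a, b, c, d, e, f} =
      F {a, b} * H {c, d, e, f} - F {a, c} * H {b, d, e, f} + F {a, d} * H {b, c, e, f}
      - F {a, e} * H {b, c, d, f} + F {a, f} * H {b, c, d, e}
      + F {b, c} * H {a, d, e, f} - F {b, d} * H {a, c, e, f} + F {b, e} * H {a, c, d, f}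
      - F {b, f} * H {a, c, d, e}
      + F {c, d} * H {a, b, e, f} - F {c, e} * H {a, b, d, f} + F {c, f} * H {a, b, d, e}
      + F {d, e} * H {a, b, c, f} - F {d, f} * H {a, b, c, e} + F {e, f} * H {a, b, c, d} := by
  obtain ⟨h1, h3, h4, h5, h6⟩ := h
  have lab : a < b := by lia
  have lac : a < c := by lia
  have lad : a < d := by lia
  have lae : a < e := by lia
  have laf : a < f := by lia
  have lbc : b < c := by lia
  have lbd : b < d := by lia
  have lbe : b < e := by lia
  have lbf : b < f := by lia
  have lcd : c < d := by lia
  have lce : c < e := by lia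
  have lcf : c < f := by lia
  have lde : d < e := by lia
  have ldf : d < f := by lia
  have lef : e < f := by lia
  simp (maxDischargeDepth := 12) only [wr1, wr2, wr3, wr4, gc0, gc1, gc2, gc3, wedge_zero, wedge_single 1 (by decide), wedge_single 2 (by decide),
    wedge_single 3 (by decide), wedge_single 4 (by decide), wedge_empty 1 (by decide), wedge_empty 2 (by decide), wedge_empty 3 (by decide), wedge_empty 4 (by decide),
    Finset.mem_insert, Finset.mem_singleton, Finset.notMem_empty, forall_eq_or_imp, forall_eq,
    false_imp_iff, implies_true, and_self, and_true, true_and, zero_add, insert_empty_eq,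
    Cc_apply, hH, h2, lab, lac, lad, lae, laf, lbc, lbd, lbe, lbf, lcd, lce, lcf, lde, ldf, lef]
  ring

lemma grade_wedge (k l : ℕ) (α β : Form ℂ 8) (hα : isGrade k α) (hβ : isGrade l β) :
    isGrade (k + l) (wedge α β) := by
  intro u hu
  unfold wedge
  apply Finset.sum_eq_zero
  intro s hs
  rw [Finset.mem_powerset] at hs
  have := Finset.card_sdiff_add_card_eq_card hs
  by_cases h : s.card = k
  · rw [hβ (u \ s) (by omega)]; simp
  · rw [hα s h]; simp

lemma onV_wedge (α β : Form ℂ 8) (hα : onV α) (hβ : onV β) : onV (wedge α β) := by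
  intro u hu
  unfold wedge
  apply Finset.sum_eq_zero
  intro s hs
  by_cases h : (0 : Fin 8) ∈ s
  · rw [hα s h]; simp
  · rw [hβ (u \ s) (by simp [h, hu])]; simp

lemma grade_hstar (k : ℕ) (hk : k ≤ 8) (α : Form ℂ 8) (hα : isGrade k α) :
    isGrade (8 - k) (hstar α) := by
  intro u hu
  unfold hstar
  rw [hα uᶜ (by rw [Finset.card_compl]; simp; have := Finset.card_le_univ u; simp at this; omega)]
  simp

lemma wedge_e1 (i : Fin 8) (H : Form ℂ 8) (u : Finset (Fin 8)) :
    wedge (e1 i) H u = if i ∈ u then signMerge {i} (u \ {i}) * H (u \ {i}) else 0 := by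
  unfold wedge e1
  split_ifs with h
  · rw [Finset.sum_eq_single {i}]
    · simp
    · intro b _ hb; simp [hb]
    · intro hb; simp [h] at hb
  · apply Finset.sum_eq_zero
    intro s hs
    rw [Finset.mem_powerset] at hs
    have : s ≠ {i} := by rintro rfl; exact h (by simpa using hs)
    simp [this]

/-- integer table of `φ` -/
def phiZ (s : Finset (Fin 8)) : ℤ :=
  if s ∈ ([{1, 2, 3}, {1, 4, 5}, {1, 6, 7}, {2, 4, 6}] : List (Finset (Fin 8))) then 1
  else if s ∈ ([{2, 5, 7}, {3, 4, 7}, {3, 5, 6}] : List (Finset (Fin 8))) then -1 else 0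

/-- integer table of `*₇φ` -/
def psiZ (s : Finset (Fin 8)) : ℤ :=
  if s ∈ ([{4, 5, 6, 7}, {2, 3, 6, 7}, {2, 3, 4, 5}, {1, 3, 5, 7}] : List (Finset (Fin 8))) then 1
  else if s ∈ ([{1, 3, 4, 6}, {1, 2, 5, 6}, {1, 2, 4, 7}] : List (Finset (Fin 8))) then -1 else 0

lemma phi8_eq (s : Finset (Fin 8)) : (phi8 s : ℂ) = phiZ s := by
  unfold phi8 phiZ
  simp only [List.mem_cons, List.not_mem_nil, or_false]
  split_ifs <;> simp_all

lemma psi8_eq (s : Finset (Fin 8)) : (psi8 s : ℂ) = psiZ s := by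
  unfold psi8 psiZ
  simp only [List.mem_cons, List.not_mem_nil, or_false]
  split_ifs <;> simp_all

/-- parity sign over the integers -/
def sgZ (s t : Finset (Fin 8)) : ℤ :=
  if (((s ×ˢ t).filter (fun p => p.2 < p.1)).card) % 2 = 1 then -1 else 1

lemma sgZ_eq (s t : Finset (Fin 8)) : (signMerge s t : ℂ) = sgZ s t := by
  rw [signMerge_eq s t _ rfl]
  unfold sgB sgZ
  split_ifs <;> simp_all

/-- integer table of `e^i ∧ φ` -/
def ePhiZ (i : Fin 8) (u : Finset (Fin 8)) : ℤ :=
  if i ∈ u then sgZ {i} (u \ {i}) * phiZ (u \ {i}) else 0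

lemma ePhi_eq (i : Fin 8) (u : Finset (Fin 8)) : (wedge (e1 i) phi8 u : ℂ) = ePhiZ i u := by
  rw [wedge_e1, ePhiZ, phi8_eq, sgZ_eq]
  split_ifs <;> simp

/-- integer table of the Cayley form -/
def PhiZ (u : Finset (Fin 8)) : ℤ := ePhiZ 0 u + psiZ u

lemma Phi8_eq (u : Finset (Fin 8)) : (Phi8 u : ℂ) = PhiZ u := by
  simp only [Phi8, PhiZ, Pi.add_apply, ePhi_eq, psi8_eq]
  push_cast; rfl

lemma phiGrade : isGrade 4 (Phi8 : Form ℂ 8) := by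
  have : ∀ s : Finset (Fin 8), s.card ≠ 4 → PhiZ s = 0 := by decide +kernel
  intro s hs
  rw [Phi8_eq, this s hs]; simp

lemma psiGrade : isGrade 4 (psi8 : Form ℂ 8) := by
  have : ∀ s : Finset (Fin 8), s.card ≠ 4 → psiZ s = 0 := by decide +kernel
  intro s hs
  rw [psi8_eq, this s hs]; simp

lemma psiV : onV (psi8 : Form ℂ 8) := by
  have : ∀ s : Finset (Fin 8), 0 ∈ s → psiZ s = 0 := by decide +kernel
  intro s hs
  rw [psi8_eq, this s hs]; simp

lemma pairTab : ∀ t : Finset (Fin 8), t.card = 2 →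
    (t, tᶜ, decide ((((tᶜ ×ˢ t).filter (fun p => p.2 < p.1)).card) % 2 = 1)) ∈
    ([({0, 1}, {2, 3, 4, 5, 6, 7}, false),
    ({0, 2}, {1, 3, 4, 5, 6, 7}, true),
    ({0, 3}, {1, 2, 4, 5, 6, 7}, false),
    ({0, 4}, {1, 2, 3, 5, 6, 7}, true),
    ({0, 5}, {1, 2, 3, 4, 6, 7}, false),
    ({0, 6}, {1, 2, 3, 4, 5, 7}, true),
    ({0, 7}, {1, 2, 3, 4, 5, 6}, false),
    ({1, 2}, {0, 3, 4, 5, 6, 7}, false),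
    ({1, 3}, {0, 2, 4, 5, 6, 7}, true),
    ({1, 4}, {0, 2, 3, 5, 6, 7}, false),
    ({1, 5}, {0, 2, 3, 4, 6, 7}, true),
    ({1, 6}, {0, 2, 3, 4, 5, 7}, false),
    ({1, 7}, {0, 2, 3, 4, 5, 6}, true),
    ({2, 3}, {0, 1, 4, 5, 6, 7}, false),
    ({2, 4}, {0, 1, 3, 5, 6, 7}, true),
    ({2, 5}, {0, 1, 3, 4, 6, 7}, false),
    ({2, 6}, {0, 1, 3, 4, 5, 7}, true),
    ({2, 7}, {0, 1, 3, 4, 5, 6}, false),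
    ({3, 4}, {0, 1, 2, 5, 6, 7}, false),
    ({3, 5}, {0, 1, 2, 4, 6, 7}, true),
    ({3, 6}, {0, 1, 2, 4, 5, 7}, false),
    ({3, 7}, {0, 1, 2, 4, 5, 6}, true),
    ({4, 5}, {0, 1, 2, 3, 6, 7}, false),
    ({4, 6}, {0, 1, 2, 3, 5, 7}, true),
    ({4, 7}, {0, 1, 2, 3, 5, 6}, false),
    ({5, 6}, {0, 1, 2, 3, 4, 7}, false),
    ({5, 7}, {0, 1, 2, 3, 4, 6}, true),
    ({6, 7}, {0, 1, 2, 3, 4, 5}, false)] : List (Finset (Fin 8) × Finset (Fin 8) × Bool)) := by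
  decide +kernel

/-- the seven scalar equations cut out by `π²₇` -/
def Q7 (α : Form ℂ 8) : Prop :=
  α {0, 1} + (α {2, 3} + α {4, 5} + α {6, 7}) = 0 ∧
  α {0, 2} - (α {1, 3} - α {4, 6} + α {5, 7}) = 0 ∧
  α {0, 3} + (α {1, 2} - α {4, 7} - α {5, 6}) = 0 ∧
  α {0, 4} - (α {1, 5} + α {2, 6} - α {3, 7}) = 0 ∧
  α {0, 5} + (α {1, 4} + α {2, 7} + α {3, 6}) = 0 ∧
  α {0, 6} - (α {1, 7} - α {2, 4} + α {3, 5}) = 0 ∧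
  α {0, 7} + (α {1, 6} - α {2, 5} - α {3, 4}) = 0

lemma hstar_of (α : Form ℂ 8) (t u : Finset (Fin 8)) (b : Bool) (hc : tᶜ = u)
    (hs : decide ((((tᶜ ×ˢ t).filter (fun p => p.2 < p.1)).card) % 2 = 1) = b) :
    hstar α t = sgB b * α u := by
  subst hc
  unfold hstar
  rw [signMerge_eq _ _ _ hs]

set_option maxHeartbeats 4000000 in
lemma pi27_of_Q7 (α : Form ℂ 8) (hα : isGrade 2 α) (h : Q7 α) : pi27 α = 0 := by
  funext t
  by_cases ht : t.card = 2
  · have key : α t + hstar (wedge Phi8 α) t = 0 := by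
      obtain ⟨E1, E2, E3, E4, E5, E6, E7⟩ := h
      have hp := pairTab t ht
      simp only [List.mem_cons, Prod.mk.injEq, List.not_mem_nil, or_false] at hp
      rcases hp with hp | hp | hp | hp | hp | hp | hp | hp | hp | hp | hp | hp | hp | hp | hp | hp | hp | hp | hp | hp | hp | hp | hp | hp | hp | hp | hp | hp
      all_goals
        obtain ⟨ht', hc, hs⟩ := hp
        rw [hstar_of _ _ _ _ hc hs, W6R α Phi8 hα phiGrade _ _ _ _ _ _ (by decide), ht']
        simp only [Phi8_eq]
        simp (decide := true) only [PhiZ, psiZ, ePhiZ, if_true, if_false, sgZ, phiZ, sgB]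
        push_cast
        first
        | linear_combination E1
        | linear_combination E2
        | linear_combination E3
        | linear_combination E4
        | linear_combination E5
        | linear_combination E6
        | linear_combination E7
        | linear_combination -E1
        | linear_combination -E2
        | linear_combination -E3
        | linear_combination -E4
        | linear_combination -E5
        | linear_combination -E6
        | linear_combination -E7
    simp [pi27, key]
  · have h1 := grade_hstar 6 (by norm_num) _ (grade_wedge 4 2 Phi8 α phiGrade hα) t ht
    simp [pi27, h1, hα t ht]

set_option maxHeartbeats 4000000 in
lemma Q7_of_pi27 (α : Form ℂ 8) (hα : isGrade 2 α) (h : pi27 α = 0) : Q7 α := by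
  have key : ∀ t, α t + hstar (wedge Phi8 α) t = 0 := by
    intro t
    have := congrFun h t
    simpa [pi27] using this
  refine ⟨?_, ?_, ?_, ?_, ?_, ?_, ?_⟩
  · have := key {0, 1}
    rw [hstar_of _ _ {2, 3, 4, 5, 6, 7} false (by decide +kernel) (by decide +kernel)] at this
    rw [W6R α Phi8 hα phiGrade 2 3 4 5 6 7 (by decide)] at this
    simp only [Phi8_eq] at this
    simp (decide := true) only [PhiZ, psiZ, ePhiZ, if_true, if_false, sgZ, phiZ, sgB] at this
    push_cast at this
    linear_combination this
  · have := key {0, 2}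
    rw [hstar_of _ _ {1, 3, 4, 5, 6, 7} true (by decide +kernel) (by decide +kernel)] at this
    rw [W6R α Phi8 hα phiGrade 1 3 4 5 6 7 (by decide)] at this
    simp only [Phi8_eq] at this
    simp (decide := true) only [PhiZ, psiZ, ePhiZ, if_true, if_false, sgZ, phiZ, sgB] at this
    push_cast at this
    linear_combination this
  · have := key {0, 3}
    rw [hstar_of _ _ {1, 2, 4, 5, 6, 7} false (by decide +kernel) (by decide +kernel)] at this
    rw [W6R α Phi8 hα phiGrade 1 2 4 5 6 7 (by decide)] at this
    simp only [Phi8_eq] at this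
    simp (decide := true) only [PhiZ, psiZ, ePhiZ, if_true, if_false, sgZ, phiZ, sgB] at this
    push_cast at this
    linear_combination this
  · have := key {0, 4}
    rw [hstar_of _ _ {1, 2, 3, 5, 6, 7} true (by decide +kernel) (by decide +kernel)] at this
    rw [W6R α Phi8 hα phiGrade 1 2 3 5 6 7 (by decide)] at this
    simp only [Phi8_eq] at this
    simp (decide := true) only [PhiZ, psiZ, ePhiZ, if_true, if_false, sgZ, phiZ, sgB] at this
    push_cast at this
    linear_combination this
  · have := key {0, 5}
    rw [hstar_of _ _ {1, 2, 3, 4, 6, 7} false (by decide +kernel) (by decide +kernel)] at this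
    rw [W6R α Phi8 hα phiGrade 1 2 3 4 6 7 (by decide)] at this
    simp only [Phi8_eq] at this
    simp (decide := true) only [PhiZ, psiZ, ePhiZ, if_true, if_false, sgZ, phiZ, sgB] at this
    push_cast at this
    linear_combination this
  · have := key {0, 6}
    rw [hstar_of _ _ {1, 2, 3, 4, 5, 7} true (by decide +kernel) (by decide +kernel)] at this
    rw [W6R α Phi8 hα phiGrade 1 2 3 4 5 7 (by decide)] at this
    simp only [Phi8_eq] at this
    simp (decide := true) only [PhiZ, psiZ, ePhiZ, if_true, if_false, sgZ, phiZ, sgB] at this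
    push_cast at this
    linear_combination this
  · have := key {0, 7}
    rw [hstar_of _ _ {1, 2, 3, 4, 5, 6} false (by decide +kernel) (by decide +kernel)] at this
    rw [W6R α Phi8 hα phiGrade 1 2 3 4 5 6 (by decide)] at this
    simp only [Phi8_eq] at this
    simp (decide := true) only [PhiZ, psiZ, ePhiZ, if_true, if_false, sgZ, phiZ, sgB] at this
    push_cast at this
    linear_combination this

lemma psiF (F : Form ℂ 8) (h2 : isGrade 2 F) :
    wedge psi8 F {2, 3, 4, 5, 6, 7} = F {2, 3} + F {4, 5} + F {6, 7} ∧
    wedge psi8 F {1, 3, 4, 5, 6, 7} = F {1, 3} - F {4, 6} + F {5, 7} ∧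
    wedge psi8 F {1, 2, 4, 5, 6, 7} = F {1, 2} - F {4, 7} - F {5, 6} ∧
    wedge psi8 F {1, 2, 3, 5, 6, 7} = F {1, 5} + F {2, 6} - F {3, 7} ∧
    wedge psi8 F {1, 2, 3, 4, 6, 7} = F {1, 4} + F {2, 7} + F {3, 6} ∧
    wedge psi8 F {1, 2, 3, 4, 5, 7} = F {1, 7} - F {2, 4} + F {3, 5} ∧
    wedge psi8 F {1, 2, 3, 4, 5, 6} = F {1, 6} - F {2, 5} - F {3, 4} := by
  refine ⟨?_, ?_, ?_, ?_, ?_, ?_, ?_⟩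
  all_goals
    rw [W6R F psi8 h2 psiGrade _ _ _ _ _ _ (by decide)]
    simp (decide := true) only [psi8, if_true, if_false]
    ring

lemma six_cases : ∀ u : Finset (Fin 8), u.card = 6 → 0 ∉ u →
    u ∈ ([{2, 3, 4, 5, 6, 7}, {1, 3, 4, 5, 6, 7}, {1, 2, 4, 5, 6, 7}, {1, 2, 3, 5, 6, 7}, {1, 2, 3, 4, 6, 7}, {1, 2, 3, 4, 5, 7}, {1, 2, 3, 4, 5, 6}] : List (Finset (Fin 8))) := by
  decide +kernel

/-- the `G₂` dDT equation in coordinates -/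
lemma ddt_iff (F T : Form ℂ 8) (h2 : isGrade 2 F) (hV : onV F) (hT : isGrade 6 T) (hTV : onV T) :
    wedge psi8 F + (6 : ℂ)⁻¹ • T = 0 ↔
    F {2, 3} + F {4, 5} + F {6, 7} + 6⁻¹ * T {2, 3, 4, 5, 6, 7} = 0 ∧
    F {1, 3} - F {4, 6} + F {5, 7} + 6⁻¹ * T {1, 3, 4, 5, 6, 7} = 0 ∧
    F {1, 2} - F {4, 7} - F {5, 6} + 6⁻¹ * T {1, 2, 4, 5, 6, 7} = 0 ∧
    F {1, 5} + F {2, 6} - F {3, 7} + 6⁻¹ * T {1, 2, 3, 5, 6, 7} = 0 ∧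
    F {1, 4} + F {2, 7} + F {3, 6} + 6⁻¹ * T {1, 2, 3, 4, 6, 7} = 0 ∧
    F {1, 7} - F {2, 4} + F {3, 5} + 6⁻¹ * T {1, 2, 3, 4, 5, 7} = 0 ∧
    F {1, 6} - F {2, 5} - F {3, 4} + 6⁻¹ * T {1, 2, 3, 4, 5, 6} = 0 := by
  obtain ⟨p1, p2, p3, p4, p5, p6, p7⟩ := psiF F h2
  rw [← p1, ← p2, ← p3, ← p4, ← p5, ← p6, ← p7]
  constructor
  · intro h
    exact ⟨congrFun h _, congrFun h _, congrFun h _, congrFun h _, congrFun h _, congrFun h _,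
      congrFun h _⟩
  · rintro ⟨E1, E2, E3, E4, E5, E6, E7⟩
    funext u
    by_cases hu : u.card = 6
    · by_cases h0 : 0 ∈ u
      · simp [onV_wedge _ _ psiV hV u h0, hTV u h0]
      · have := six_cases u hu h0
        simp only [List.mem_cons, List.not_mem_nil, or_false] at this
        rcases this with rfl | rfl | rfl | rfl | rfl | rfl | rfl
        · exact E1
        · exact E2
        · exact E3
        · exact E4
        · exact E5
        · exact E6
        · exact E7
    · simp [grade_wedge 4 2 _ _ psiGrade h2 u hu, hT u hu]

lemma Q7_iff (F T : Form ℂ 8) (h2 : isGrade 2 F) (hV : onV F) (hT : isGrade 6 T) (hTV : onV T) :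
    Q7 (F + (6 : ℂ)⁻¹ • hstar T) ↔
    F {2, 3} + F {4, 5} + F {6, 7} + 6⁻¹ * T {2, 3, 4, 5, 6, 7} = 0 ∧
    F {1, 3} - F {4, 6} + F {5, 7} + 6⁻¹ * T {1, 3, 4, 5, 6, 7} = 0 ∧
    F {1, 2} - F {4, 7} - F {5, 6} + 6⁻¹ * T {1, 2, 4, 5, 6, 7} = 0 ∧
    F {1, 5} + F {2, 6} - F {3, 7} + 6⁻¹ * T {1, 2, 3, 5, 6, 7} = 0 ∧
    F {1, 4} + F {2, 7} + F {3, 6} + 6⁻¹ * T {1, 2, 3, 4, 6, 7} = 0 ∧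
    F {1, 7} - F {2, 4} + F {3, 5} + 6⁻¹ * T {1, 2, 3, 4, 5, 7} = 0 ∧
    F {1, 6} - F {2, 5} - F {3, 4} + 6⁻¹ * T {1, 2, 3, 4, 5, 6} = 0 := by
  have hA : ∀ i j : Fin 8, 0 < i ∧ 0 < j →
      (F + (6 : ℂ)⁻¹ • hstar T) {i, j} = F {i, j} := by
    rintro i j ⟨hi, hj⟩
    have : hstar T {i, j} = 0 := by
      unfold hstar
      rw [hTV _ (by simp [hi.ne, hj.ne])]
      simp
    simp [this]
  have a1 : (F + (6 : ℂ)⁻¹ • hstar T) {0, 1} = (6⁻¹ * T {2, 3, 4, 5, 6, 7}) := by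
    simp only [Pi.add_apply, Pi.smul_apply, smul_eq_mul]
    rw [hstar_of _ _ {2, 3, 4, 5, 6, 7} false (by decide +kernel) (by decide +kernel),
      hV {0, 1} (by simp)]
    simp [sgB]
  have a2 : (F + (6 : ℂ)⁻¹ • hstar T) {0, 2} = -(6⁻¹ * T {1, 3, 4, 5, 6, 7}) := by
    simp only [Pi.add_apply, Pi.smul_apply, smul_eq_mul]
    rw [hstar_of _ _ {1, 3, 4, 5, 6, 7} true (by decide +kernel) (by decide +kernel),
      hV {0, 2} (by simp)]
    simp [sgB]
  have a3 : (F + (6 : ℂ)⁻¹ • hstar T) {0, 3} = (6⁻¹ * T {1, 2, 4, 5, 6, 7}) := by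
    simp only [Pi.add_apply, Pi.smul_apply, smul_eq_mul]
    rw [hstar_of _ _ {1, 2, 4, 5, 6, 7} false (by decide +kernel) (by decide +kernel),
      hV {0, 3} (by simp)]
    simp [sgB]
  have a4 : (F + (6 : ℂ)⁻¹ • hstar T) {0, 4} = -(6⁻¹ * T {1, 2, 3, 5, 6, 7}) := by
    simp only [Pi.add_apply, Pi.smul_apply, smul_eq_mul]
    rw [hstar_of _ _ {1, 2, 3, 5, 6, 7} true (by decide +kernel) (by decide +kernel),
      hV {0, 4} (by simp)]
    simp [sgB]
  have a5 : (F + (6 : ℂ)⁻¹ • hstar T) {0, 5} = (6⁻¹ * T {1, 2, 3, 4, 6, 7}) := by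
    simp only [Pi.add_apply, Pi.smul_apply, smul_eq_mul]
    rw [hstar_of _ _ {1, 2, 3, 4, 6, 7} false (by decide +kernel) (by decide +kernel),
      hV {0, 5} (by simp)]
    simp [sgB]
  have a6 : (F + (6 : ℂ)⁻¹ • hstar T) {0, 6} = -(6⁻¹ * T {1, 2, 3, 4, 5, 7}) := by
    simp only [Pi.add_apply, Pi.smul_apply, smul_eq_mul]
    rw [hstar_of _ _ {1, 2, 3, 4, 5, 7} true (by decide +kernel) (by decide +kernel),
      hV {0, 6} (by simp)]
    simp [sgB]
  have a7 : (F + (6 : ℂ)⁻¹ • hstar T) {0, 7} = (6⁻¹ * T {1, 2, 3, 4, 5, 6}) := by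
    simp only [Pi.add_apply, Pi.smul_apply, smul_eq_mul]
    rw [hstar_of _ _ {1, 2, 3, 4, 5, 6} false (by decide +kernel) (by decide +kernel),
      hV {0, 7} (by simp)]
    simp [sgB]
  unfold Q7
  simp (decide := true) only [hA, Fin.reduceLT, and_self, a1, a2, a3, a4, a5, a6, a7]
  refine and_congr ?_ (and_congr ?_ (and_congr ?_ (and_congr ?_ (and_congr ?_ (and_congr ?_ ?_)))))
  all_goals
    constructor
    all_goals
      intro h
      first
      | linear_combination h
      | linear_combination -h

lemma inner_list (β : Form ℂ 8) (hβ : onV β) (i : Fin 8) (a b c d : Finset (Fin 8))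
    (h1 : [a, b, c, d].Nodup)
    (hS : ∀ s : Finset (Fin 8), 0 ∉ s → ePhiZ i s ≠ 0 → s ∈ [a, b, c, d]) (p q r t : ℤ)
    (hp : ePhiZ i a = p ∧ ePhiZ i b = q ∧ ePhiZ i c = r ∧ ePhiZ i d = t)
    (h : β a * p + β b * q + β c * r + β d * t = 0) :
    inner' β (lambda4 (e1 i)) = 0 := by
  have key : ∑ s, β s * (ePhiZ i s : ℂ) = 0 := by
    rw [← h]
    have : ∑ s ∈ [a, b, c, d].toFinset, β s * (ePhiZ i s : ℂ) = ∑ s, β s * (ePhiZ i s : ℂ) := by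
      apply Finset.sum_subset (Finset.subset_univ _)
      intro s _ hs
      rw [List.mem_toFinset] at hs
      by_cases h0 : 0 ∈ s
      · simp [hβ s h0]
      · have : ePhiZ i s = 0 := by
          by_contra hne
          exact hs (hS s h0 hne)
        simp [this]
    rw [← this, List.sum_toFinset _ h1]
    simp only [List.map_cons, List.map_nil, List.sum_cons, List.sum_nil, hp]
    ring
  have e : ∀ s, β s * lambda4 (e1 i) s =
      -(algebraMap ℝ ℂ (Real.sqrt 8))⁻¹ * (β s * (ePhiZ i s : ℂ)) := by
    intro s
    by_cases h0 : 0 ∈ s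
    · simp [hβ s h0]
    · simp only [lambda4, Pi.smul_apply, Pi.sub_apply, ePhi_eq, smul_eq_mul]
      rw [wedge_e1, if_neg h0]
      ring
  unfold inner'
  rw [Finset.sum_congr rfl (fun s _ => e s), ← Finset.mul_sum, key, mul_zero]

set_option maxHeartbeats 4000000 in
lemma pi47_zero (F : Form ℂ 8) (h2 : isGrade 2 F) (hV : onV F)
    (h : F {2, 3} + F {4, 5} + F {6, 7} + 6⁻¹ * wedge F (wedge F F) {2, 3, 4, 5, 6, 7} = 0 ∧
    F {1, 3} - F {4, 6} + F {5, 7} + 6⁻¹ * wedge F (wedge F F) {1, 3, 4, 5, 6, 7} = 0 ∧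
    F {1, 2} - F {4, 7} - F {5, 6} + 6⁻¹ * wedge F (wedge F F) {1, 2, 4, 5, 6, 7} = 0 ∧
    F {1, 5} + F {2, 6} - F {3, 7} + 6⁻¹ * wedge F (wedge F F) {1, 2, 3, 5, 6, 7} = 0 ∧
    F {1, 4} + F {2, 7} + F {3, 6} + 6⁻¹ * wedge F (wedge F F) {1, 2, 3, 4, 6, 7} = 0 ∧
    F {1, 7} - F {2, 4} + F {3, 5} + 6⁻¹ * wedge F (wedge F F) {1, 2, 3, 4, 5, 7} = 0 ∧
    F {1, 6} - F {2, 5} - F {3, 4} + 6⁻¹ * wedge F (wedge F F) {1, 2, 3, 4, 5, 6} = 0) :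
    pi47 (wedge F F) = 0 := by
  obtain ⟨E1, E2, E3, E4, E5, E6, E7⟩ := h
  have hFV := onV_wedge F F hV hV
  rw [W6 F _ h2 _ _ _ _ _ _ (by decide)] at E1
  rw [W6 F _ h2 _ _ _ _ _ _ (by decide)] at E2
  rw [W6 F _ h2 _ _ _ _ _ _ (by decide)] at E3
  rw [W6 F _ h2 _ _ _ _ _ _ (by decide)] at E4
  rw [W6 F _ h2 _ _ _ _ _ _ (by decide)] at E5
  rw [W6 F _ h2 _ _ _ _ _ _ (by decide)] at E6
  rw [W6 F _ h2 _ _ _ _ _ _ (by decide)] at E7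
  simp (decide := true) only [W4 F F h2] at E1 E2 E3 E4 E5 E6 E7
  have k1 : inner' (wedge F F) (lambda4 (e1 1)) = 0 := by
    apply inner_list _ hFV 1 {1, 2, 4, 6} {1, 2, 5, 7} {1, 3, 4, 7} {1, 3, 5, 6} (by decide +kernel)
      (by decide +kernel) (1) (-1) (-1) (-1) (by decide +kernel)
    simp (decide := true) only [W4 F F h2]
    push_cast
    linear_combination - 2 * F {1, 2} * E2 + 2 * F {1, 3} * E3 - 2 * F {1, 4} * E4 + 2 * F {1, 5} * E5 - 2 * F {1, 6} * E6 + 2 * F {1, 7} * E7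
  have k2 : inner' (wedge F F) (lambda4 (e1 2)) = 0 := by
    apply inner_list _ hFV 2 {1, 2, 4, 5} {1, 2, 6, 7} {2, 3, 4, 7} {2, 3, 5, 6} (by decide +kernel)
      (by decide +kernel) (-1) (-1) (-1) (-1) (by decide +kernel)
    simp (decide := true) only [W4 F F h2]
    push_cast
    linear_combination - 2 * F {1, 2} * E1 + 2 * F {2, 3} * E3 - 2 * F {2, 4} * E4 + 2 * F {2, 5} * E5 - 2 * F {2, 6} * E6 + 2 * F {2, 7} * E7
  have k3 : inner' (wedge F F) (lambda4 (e1 3)) = 0 := by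
    apply inner_list _ hFV 3 {1, 3, 4, 5} {1, 3, 6, 7} {2, 3, 4, 6} {2, 3, 5, 7} (by decide +kernel)
      (by decide +kernel) (-1) (-1) (-1) (1) (by decide +kernel)
    simp (decide := true) only [W4 F F h2]
    push_cast
    linear_combination - 2 * F {1, 3} * E1 + 2 * F {2, 3} * E2 - 2 * F {3, 4} * E4 + 2 * F {3, 5} * E5 - 2 * F {3, 6} * E6 + 2 * F {3, 7} * E7
  have k4 : inner' (wedge F F) (lambda4 (e1 4)) = 0 := by
    apply inner_list _ hFV 4 {1, 2, 3, 4} {1, 4, 6, 7} {2, 4, 5, 7} {3, 4, 5, 6} (by decide +kernel)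
      (by decide +kernel) (-1) (-1) (1) (1) (by decide +kernel)
    simp (decide := true) only [W4 F F h2]
    push_cast
    linear_combination - 2 * F {1, 4} * E1 + 2 * F {2, 4} * E2 - 2 * F {3, 4} * E3 + 2 * F {4, 5} * E5 - 2 * F {4, 6} * E6 + 2 * F {4, 7} * E7
  have k5 : inner' (wedge F F) (lambda4 (e1 5)) = 0 := by
    apply inner_list _ hFV 5 {1, 2, 3, 5} {1, 5, 6, 7} {2, 4, 5, 6} {3, 4, 5, 7} (by decide +kernel)
      (by decide +kernel) (-1) (-1) (1) (-1) (by decide +kernel)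
    simp (decide := true) only [W4 F F h2]
    push_cast
    linear_combination - 2 * F {1, 5} * E1 + 2 * F {2, 5} * E2 - 2 * F {3, 5} * E3 + 2 * F {4, 5} * E4 - 2 * F {5, 6} * E6 + 2 * F {5, 7} * E7
  have k6 : inner' (wedge F F) (lambda4 (e1 6)) = 0 := by
    apply inner_list _ hFV 6 {1, 2, 3, 6} {1, 4, 5, 6} {2, 5, 6, 7} {3, 4, 6, 7} (by decide +kernel)
      (by decide +kernel) (-1) (-1) (-1) (-1) (by decide +kernel)
    simp (decide := true) only [W4 F F h2]
    push_cast
    linear_combination - 2 * F {1, 6} * E1 + 2 * F {2, 6} * E2 - 2 * F {3, 6} * E3 + 2 * F {4, 6} * E4 - 2 * F {5, 6} * E5 + 2 * F {6, 7} * E7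
  have k7 : inner' (wedge F F) (lambda4 (e1 7)) = 0 := by
    apply inner_list _ hFV 7 {1, 2, 3, 7} {1, 4, 5, 7} {2, 4, 6, 7} {3, 5, 6, 7} (by decide +kernel)
      (by decide +kernel) (-1) (-1) (-1) (1) (by decide +kernel)
    simp (decide := true) only [W4 F F h2]
    push_cast
    linear_combination - 2 * F {1, 7} * E1 + 2 * F {2, 7} * E2 - 2 * F {3, 7} * E3 + 2 * F {4, 7} * E4 - 2 * F {5, 7} * E5 + 2 * F {6, 7} * E6
  unfold pi47
  apply Finset.sum_eq_zero
  intro μ _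
  have : inner' (wedge F F) (lambda4 (e1 μ.succ)) = 0 := by
    fin_cases μ
    · exact k1
    · exact k2
    · exact k3
    · exact k4
    · exact k5
    · exact k6
    · exact k7
  rw [this, zero_smul]

/-- Lemma 7.1.  Let `F` be an `√-1 ℝ`-valued 2-form on `ℝ⁸` with
`i(e₀) F = 0` (the pointwise model of a connection on a `G₂`-manifold `Y` pulled back to
`S¹ × Y`).  The following are equivalent:
(1) `*₇φ ∧ F + (1/6) F³ = 0` (the `G₂` dDT equation);
(2) `π²₇(F + (1/6) *₈F³) = 0`;
(3) `π²₇(F + (1/6) *₈F³) = 0` and `π⁴₇(F²) = 0`. -/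
theorem statement16 (F : Form ℂ 8) (h2 : isGrade 2 F)
    (hIm : ∀ s, (F s).re = 0) (hV : onV F) :
    ((wedge psi8 F + (6 : ℂ)⁻¹ • wedge F (wedge F F) = 0) ↔
      pi27 (F + (6 : ℂ)⁻¹ • hstar (wedge F (wedge F F))) = 0) ∧
    ((wedge psi8 F + (6 : ℂ)⁻¹ • wedge F (wedge F F) = 0) ↔
      (pi27 (F + (6 : ℂ)⁻¹ • hstar (wedge F (wedge F F))) = 0 ∧
        pi47 (wedge F F) = 0)) := by
  have hFF := grade_wedge 2 2 F F h2 h2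
  have hT : isGrade 6 (wedge F (wedge F F)) := grade_wedge 2 4 F _ h2 hFF
  have hTV := onV_wedge F _ hV (onV_wedge F F hV hV)
  have hα : isGrade 2 (F + (6 : ℂ)⁻¹ • hstar (wedge F (wedge F F))) := by
    intro s hs
    have h1 := grade_hstar 6 (by norm_num) _ hT s hs
    simp [h2 s hs, h1]
  have e1 := ddt_iff F _ h2 hV hT hTV
  have e2 := Q7_iff F _ h2 hV hT hTV
  have key : (wedge psi8 F + (6 : ℂ)⁻¹ • wedge F (wedge F F) = 0) ↔
      pi27 (F + (6 : ℂ)⁻¹ • hstar (wedge F (wedge F F))) = 0 :=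
    ⟨fun h => pi27_of_Q7 _ hα (e2.2 (e1.1 h)), fun h => e1.2 (e2.1 (Q7_of_pi27 _ hα h))⟩
  exact ⟨key, fun h => ⟨key.1 h, pi47_zero F h2 hV (e1.1 h)⟩, fun h => key.2 h.1⟩

end FMpaper
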